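/- arXiv:math-ph/9903011 — 2 statements merged into one kernel-verified Lean document; each statement's English description precedes it below -/
import Mathlib

section
/- Let α ∈ (0,1) be irrational with continued fraction expansion α = [a_1,a_2,a_3,...]. For every n ≥ 2, the word identity s_n s_{n+1} = s_{n+1} s_{n−1}^{a_n − 1} s_{n−2} s_{n−1} holds (concatenation of words, with s_{n−1}^{a_n − 1} denoting the (a_n − 1)-fold concatenation of s_{n−1}). -/
/-!
Put `x = s_n`, `y = s_{n-1}`, `w = s_{n-2}`, `a = a_n`, `b = a_{n+1}`, so that `x = y^a w` and
`s_{n+1} = x^b y`. As `x` commutes with its own powers, `x (x^b y) = x^b x y = x^b y^a w y`, and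
splitting off one factor `y^a = y y^(a-1)` gives the claim. The splitting needs `a ≥ 1`, which is
`cfa_pos`: the Gauss map keeps irrational numbers irrational and inside `(0,1)`, and the reciprocal
of a number in `(0,1)` has integer part at least `1`.
-/

/-- Partial quotients of the continued fraction expansion of `α ∈ (0,1)`:
`cfa α n = a_n` for `n ≥ 1`, computed via the Gauss map. -/
noncomputable def cfa (α : ℝ) (n : ℕ) : ℕ :=
  ⌊((fun x : ℝ => Int.fract x⁻¹)^[n - 1] α)⁻¹⌋₊

/-- The standard Sturmian words, with index shifted by one:
`sw α (n+1)` is the word `s_n` of the paper (so `sw α 0 = s₋₁ = 1`, `sw α 1 = s₀ = 0`,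
`sw α 2 = s₁ = s₀^(a₁-1) s₋₁`, and `s_n = s_{n-1}^{a_n} s_{n-2}` for `n ≥ 2`).
The letter `1` is encoded by `true` and `0` by `false`. -/
noncomputable def sw (α : ℝ) : ℕ → List Bool
  | 0 => [true]
  | 1 => [false]
  | 2 => (List.replicate (cfa α 1 - 1) [false]).flatten ++ [true]
  | n + 3 => (List.replicate (cfa α (n + 2)) (sw α (n + 2))).flatten ++ sw α (n + 1)

/-- Denominators of the rational approximants: `q₀ = 1`, `q₁ = a₁`, `qₙ = aₙ q_{n-1} + q_{n-2}`. -/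
noncomputable def qden (α : ℝ) : ℕ → ℕ
  | 0 => 1
  | 1 => cfa α 1
  | n + 2 => cfa α (n + 2) * qden α (n + 1) + qden α n

open scoped Classical in
/-- The Sturmian potential `v_{α,θ}(n) = χ_{[1-α,1)}(nα + θ mod 1)`, with value `1`
encoded by `true` and `0` by `false` (note `Int.fract x < 1` always). -/
noncomputable def sturmian (α θ : ℝ) (n : ℤ) : Bool :=
  if 1 - α ≤ Int.fract ((n : ℝ) * α + θ) then true else false

/-- An `(n,α)`-partition of a two-sided sequence `f : ℤ → Bool`, given by the
break points `d : ℤ → ℤ` (interval `I_j = {d j, …, d (j+1) - 1}`) and blocks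
`z : ℤ → List Bool`: the `d j` are strictly increasing, `0 ∈ I₀`, each block is
`s_n = sw α (n+1)` or `s_{n-1} = sw α n`, consecutive intervals are adjacent with
`I_j` of length `(z j).length`, and `f` restricted to `I_j` spells the word `z j`. -/
def IsNPartition (α : ℝ) (n : ℕ) (f : ℤ → Bool) (d : ℤ → ℤ) (z : ℤ → List Bool) : Prop :=
  StrictMono d ∧
  (d 0 ≤ 0 ∧ 0 < d 1) ∧
  (∀ j : ℤ, z j = sw α (n + 1) ∨ z j = sw α n) ∧
  (∀ j : ℤ, d (j + 1) = d j + (z j).length) ∧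
  (∀ j : ℤ, z j = (List.range (z j).length).map fun k => f (d j + (k : ℤ)))

/-- The finite word `x` occurs in the two-sided sequence `v` adjacent to `i`:
either `x = v_i v_{i+1} … v_{i+l-1}` or `x = v_{i-l+1} … v_{i-1} v_i`. -/
def AdjacentTo (v : ℤ → Bool) (x : List Bool) (i : ℤ) : Prop :=
  x = ((List.range x.length).map fun k => v (i + (k : ℤ))) ∨
  x = ((List.range x.length).map fun k => v (i - (x.length : ℤ) + 1 + (k : ℤ)))

lemma gauss_iterate_mem {α : ℝ} (hα0 : 0 < α) (hα1 : α < 1) (hirr : Irrational α) (k : ℕ) :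
    let x := (fun x : ℝ => Int.fract x⁻¹)^[k] α
    0 < x ∧ x < 1 ∧ Irrational x := by
  induction k with
  | zero => exact ⟨hα0, hα1, hirr⟩
  | succ k ih =>
    simp only [Function.iterate_succ_apply'] at ih ⊢
    set y := (fun x : ℝ => Int.fract x⁻¹)^[k] α
    have hi : Irrational (Int.fract y⁻¹) := ih.2.2.inv.sub_intCast ⌊y⁻¹⌋
    exact ⟨lt_of_le_of_ne (Int.fract_nonneg _) hi.ne_zero.symm, Int.fract_lt_one _, hi⟩

lemma cfa_pos {α : ℝ} (hα0 : 0 < α) (hα1 : α < 1) (hirr : Irrational α) (n : ℕ) :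
    0 < cfa α n := by
  obtain ⟨h0, h1, -⟩ := gauss_iterate_mem hα0 hα1 hirr (n - 1)
  exact Nat.floor_pos.mpr ((one_lt_inv₀ h0).mpr h1).le

lemma append_flatten_replicate_comm {β : Type*} (x : List β) (b : ℕ) :
    x ++ (List.replicate b x).flatten = (List.replicate b x).flatten ++ x := by
  rw [← List.flatten_cons, ← List.replicate_succ, List.replicate_succ', List.flatten_concat]

/-- For every `n ≥ 2`, `s_n s_{n+1} = s_{n+1} s_{n-1}^{a_n - 1} s_{n-2} s_{n-1}`
(here `s_m = sw α (m+1)` and `a_n = cfa α n`). -/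
theorem sturmianWord_commutation
    (α : ℝ) (hα0 : 0 < α) (hα1 : α < 1) (hirr : Irrational α)
    (n : ℕ) (hn : 2 ≤ n) :
    sw α (n + 1) ++ sw α (n + 2) =
      sw α (n + 2) ++ (List.replicate (cfa α n - 1) (sw α n)).flatten
        ++ sw α (n - 1) ++ sw α n := by
  obtain ⟨m, rfl⟩ := Nat.exists_eq_add_of_le' hn
  obtain ⟨a, ha⟩ := Nat.exists_eq_succ_of_ne_zero (cfa_pos hα0 hα1 hirr (m + 2)).ne'
  have hx : sw α (m + 3) =
      sw α (m + 2) ++ (List.replicate a (sw α (m + 2))).flatten ++ sw α (m + 1) := by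
    rw [sw, ha, Nat.succ_eq_add_one, List.replicate_succ, List.flatten_cons]
  have hs : sw α (m + 4) =
      (List.replicate (cfa α (m + 3)) (sw α (m + 3))).flatten ++ sw α (m + 2) := by
    rw [sw]
  change sw α (m + 3) ++ sw α (m + 4) = sw α (m + 4) ++
    (List.replicate (cfa α (m + 2) - 1) (sw α (m + 2))).flatten ++ sw α (m + 1) ++ sw α (m + 2)
  rw [hs, ← List.append_assoc, append_flatten_replicate_comm, ha, Nat.succ_sub_one]
  generalize (List.replicate (cfa α (m + 3)) (sw α (m + 3))).flatten = p
  rw [hx]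
  simp only [List.append_assoc]
end

section
/- Let α ∈ (0,1) be irrational and let Ω(α) be the set of all ω ∈ {0,1}^ℤ that are accumulation points, in the product (pointwise convergence) topology, of the sequence of translates (T^m v_{α,0})_{m∈ℕ}, where (Tf)(n) = f(n+1). Then for every ω ∈ Ω(α) and every n ∈ ℕ₀, there exists a unique (n,α)-partition of ω. -/
/-! ### Two-sided sequences -/

/-- A surjective self-map has a two-sided orbit through any given point. -/
lemma exists_orbit {X : Type*} (nx : X → X) (hs : Function.Surjective nx) (x : X) :
    ∃ e : ℤ → X, e 0 = x ∧ ∀ j, e (j + 1) = nx (e j) := by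
  choose pr hpr using hs
  refine ⟨fun j => match j with
    | Int.ofNat n => nx^[n] x
    | Int.negSucc n => pr^[n + 1] x, rfl, ?_⟩
  intro j
  match j with
  | Int.ofNat n =>
    change nx^[n + 1] x = _
    rw [Function.iterate_succ_apply']
  | Int.negSucc 0 =>
    change x = nx (pr x)
    rw [hpr]
  | Int.negSucc (n + 1) =>
    change pr^[n + 1] x = nx (pr^[n + 1 + 1] x)
    rw [Function.iterate_succ_apply' pr (n + 1), hpr]

lemma exists_sum {M : Type*} [AddCommGroup M] (c : ℤ → M) (x : M) :
    ∃ F : ℤ → M, F 0 = x ∧ ∀ j, F (j + 1) = F j + c j := by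
  obtain ⟨e, h0, he⟩ := exists_orbit (fun p : ℤ × M => (p.1 + 1, p.2 + c p.1))
    (fun p => ⟨(p.1 - 1, p.2 - c (p.1 - 1)), by simp⟩) (0, x)
  have h1 : ∀ j, (e j).1 = j := by
    intro j
    induction j using Int.induction_on with
    | zero => rw [h0]
    | succ i ih => rw [he]; simp [ih]
    | pred i ih =>
      have := he (-(i : ℤ) - 1)
      rw [sub_add_cancel] at this
      rw [this] at ih
      simp only at ih
      omega
  refine ⟨fun j => (e j).2, by simp [h0], fun j => ?_⟩
  simp only [he, h1]

lemma strictMono_of_step {d : ℤ → ℤ} (h : ∀ j, d j < d (j + 1)) : StrictMono d :=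
  strictMono_int_of_lt_succ h

/-- A strictly increasing `d : ℤ → ℤ` cuts `ℤ` into the intervals `[d j, d (j+1))`. -/
lemma exists_block {d : ℤ → ℤ} (h : StrictMono d) (k : ℤ) :
    ∃ j, d j ≤ k ∧ k < d (j + 1) := by
  have hup : ∀ n : ℕ, d 0 + n ≤ d n := by
    intro n
    induction n with
    | zero => simp
    | succ n ih =>
      have := h (lt_add_one (n : ℤ))
      push_cast
      omega
  have hdown : ∀ n : ℕ, d (-(n : ℤ)) ≤ d 0 - n := by
    intro n
    induction n with
    | zero => simp
    | succ n ih =>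
      have := h (show (-((n + 1 : ℕ) : ℤ)) < -(n : ℤ) by push_cast; omega)
      push_cast at *
      omega
  obtain ⟨j, hj, hmax⟩ := Int.exists_greatest_of_bdd (P := fun j => d j ≤ k)
    ⟨(k - d 0).toNat, fun z hz => by
      by_contra hlt
      have h1 := h (not_le.mp hlt)
      have h2 := hup (k - d 0).toNat
      omega⟩
    ⟨-((d 0 - k).toNat : ℤ), by have := hdown (d 0 - k).toNat; omega⟩
  refine ⟨j, hj, ?_⟩
  by_contra hlt
  have := hmax (j + 1) (not_lt.mp hlt)
  omega

lemma between_unique {d : ℤ → ℤ} (h : StrictMono d) {k i j : ℤ}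
    (hi : d i ≤ k) (hi' : k < d (i + 1)) (hj : d j ≤ k) (hj' : k < d (j + 1)) : i = j := by
  have h1 := h.lt_iff_lt.mp (hi.trans_lt hj')
  have h2 := h.lt_iff_lt.mp (hj.trans_lt hi')
  omega

/-! ### Words occurring in a sequence, and codings -/

/-- The word `w` occurs in `f` at position `p`. -/
def Occ (f : ℤ → Bool) : ℤ → List Bool → Prop
  | _, [] => True
  | p, a :: w => f p = a ∧ Occ f (p + 1) w

lemma occ_append (f : ℤ → Bool) (p : ℤ) (w w' : List Bool) :
    Occ f p (w ++ w') ↔ Occ f p w ∧ Occ f (p + w.length) w' := by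
  induction w generalizing p with
  | nil => simp [Occ]
  | cons a w ih =>
    simp only [List.cons_append, Occ, ih, List.length_cons, and_assoc]
    push_cast
    rw [show p + 1 + (w.length : ℤ) = p + (w.length + 1) by ring]

lemma occ_power (f : ℤ → Bool) (p : ℤ) (b : ℕ) (u : List Bool) :
    Occ f p (List.replicate b u).flatten ↔ ∀ i < b, Occ f (p + i * u.length) u := by
  induction b with
  | zero => simp [Occ]
  | succ b ih =>
    rw [List.replicate_succ', List.flatten_append, occ_append, ih]
    simp only [List.flatten_cons, List.flatten_nil, List.append_nil, List.length_flatten,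
      List.map_replicate, List.sum_replicate, smul_eq_mul]
    push_cast
    constructor
    · rintro ⟨h1, h2⟩ i hi
      rcases Nat.lt_succ_iff_lt_or_eq.mp hi with h | rfl
      · exact h1 i h
      · exact h2
    · intro h
      exact ⟨fun i hi => h i (by omega), h b (by omega)⟩

/-- The range of positions is coerced to `List ℤ` before mapping, exactly as in `IsNPartition`. -/
lemma eq_map_iff_occ (f : ℤ → Bool) (p : ℤ) (w : List Bool) :
    w = ((List.range w.length).map fun k => f (p + (k : ℤ))) ↔ Occ f p w := by
  have key : ∀ (p : ℤ) (w : List Bool),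
      w = (List.range w.length).map (fun k : ℕ => f (p + (k : ℤ))) ↔ Occ f p w := by
    intro p w
    induction w generalizing p with
    | nil => simp [Occ]
    | cons a w ih =>
      rw [Occ, ← ih, List.length_cons, List.range_succ_eq_map, List.map_cons, List.cons.injEq,
        List.map_map]
      have : ((fun k : ℕ => f (p + (k : ℤ))) ∘ Nat.succ) = fun k : ℕ => f (p + 1 + (k : ℤ)) := by
        funext k
        simp only [Function.comp, Nat.succ_eq_add_one]
        push_cast
        congr 1
        ring
      rw [this]
      simp [eq_comm]
  rw [← key]
  simp only [List.pure_def, List.bind_eq_flatMap, ← List.map_eq_flatMap, List.map_map,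
    Function.comp_def]

/-- `f` is the concatenation of the words `u` (where `g j = false`) and `v` (where `g j = true`),
the `j`-th of them starting at position `d j`.  The numbering of the blocks is not normalized. -/
def Codes (u v : List Bool) (f : ℤ → Bool) (d : ℤ → ℤ) (g : ℤ → Bool) : Prop :=
  ∀ j, d (j + 1) = d j + (bif g j then v else u).length ∧ Occ f (d j) (bif g j then v else u)

/-- The coding of `f` by `u` and `v` is unique up to renumbering the blocks. -/
def UniqCodes (u v : List Bool) (f : ℤ → Bool) : Prop :=
  ∀ d g d' g', Codes u v f d g → Codes u v f d' g' →
    ∃ c, ∀ j, d' j = d (j + c) ∧ g' j = g (j + c)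

/-- `g` is cut into the blocks `false^b true` (where `G j = false`) and `false` (where
`G j = true`), the `j`-th of them starting at position `e j`. -/
def Desub (b : ℕ) (g : ℤ → Bool) (e : ℤ → ℤ) (G : ℤ → Bool) : Prop :=
  ∀ j, (G j = true ∧ g (e j) = false ∧ e (j + 1) = e j + 1) ∨
    (G j = false ∧ (∀ t : ℕ, t < b → g (e j + t) = false) ∧ g (e j + b) = true ∧
      e (j + 1) = e j + b + 1)

lemma Desub.strictMono {b : ℕ} {g : ℤ → Bool} {e : ℤ → ℤ} {G : ℤ → Bool} (h : Desub b g e G) :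
    StrictMono e :=
  strictMono_of_step fun j => by rcases h j with h | h <;> omega

lemma Desub.false_of_lt {b : ℕ} {g : ℤ → Bool} {e : ℤ → ℤ} {G : ℤ → Bool} (h : Desub b g e G)
    (t : ℕ) (ht : t < b) (j : ℤ) : g (e j + t) = false := by
  induction t generalizing j with
  | zero =>
    rcases h j with h1 | h1
    · simpa using h1.2.1
    · exact h1.2.1 0 ht
  | succ t ih =>
    rcases h j with h1 | h1
    · have := ih (by omega) (j + 1)
      rw [h1.2.2] at this
      rw [← this]
      congr 1
      push_cast
      ring
    · exact h1.2.1 _ ht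

lemma Desub.mem_range_iff {b : ℕ} {g : ℤ → Bool} {e : ℤ → ℤ} {G : ℤ → Bool} (h : Desub b g e G)
    (k : ℤ) : (∃ j, k = e j) ↔ ∀ t : ℕ, t < b → g (k + t) = false := by
  constructor
  · rintro ⟨j, rfl⟩ t ht
    exact h.false_of_lt t ht j
  · intro hk
    obtain ⟨j, hj1, hj2⟩ := exists_block h.strictMono k
    refine ⟨j, ?_⟩
    rcases h j with h1 | ⟨-, -, h2, h3⟩
    · omega
    · by_contra hne
      -- `k` is interior to a block `false^b true`, whose last letter is at distance `< b`
      have := hk (e j + b - k).toNat (by omega)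
      rw [show k + ((e j + b - k).toNat : ℤ) = e j + b by omega, h2] at this
      cases this

/-- The type of a block is read off from the letter at distance `b` from its start. -/
lemma Desub.label {b : ℕ} {g : ℤ → Bool} {e : ℤ → ℤ} {G : ℤ → Bool} (h : Desub b g e G)
    (j : ℤ) : G j = !g (e j + b) := by
  rcases h j with ⟨h1, h2, h3⟩ | ⟨h1, -, h2, -⟩
  · rw [h1]
    rcases b with _ | b
    · simp [h2]
    · have := h.false_of_lt b (by omega) (j + 1)
      rw [h3] at this
      push_cast
      rw [show e j + ((b : ℤ) + 1) = e j + 1 + b by ring, this]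
      rfl
  · simp [h1, h2]

lemma Desub.unique {b : ℕ} {g : ℤ → Bool} {e e' : ℤ → ℤ} {G G' : ℤ → Bool}
    (h : Desub b g e G) (h' : Desub b g e' G') :
    ∃ c, ∀ j, e' j = e (j + c) ∧ G' j = G (j + c) := by
  have hm : ∀ j, ∃ m, e' j = e m := fun j =>
    (h.mem_range_iff _).mpr ((h'.mem_range_iff _).mp ⟨j, rfl⟩)
  choose m hm using hm
  have hG : ∀ j, G' j = G (m j) := fun j => by rw [h'.label, h.label, hm]
  have hstep : ∀ j, m (j + 1) = m j + 1 := by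
    intro j
    apply h.strictMono.injective
    rw [← hm]
    have hGj := hG j
    have hmj := hm j
    rcases h' j with h1 | h1 <;> rcases h (m j) with h2 | h2
    · omega
    · simp [h1.1, h2.1] at hGj
    · simp [h1.1, h2.1] at hGj
    · omega
  have hc : ∀ j, m j = j + m 0 := by
    intro j
    induction j using Int.induction_on with
    | zero => simp
    | succ i ih => rw [hstep, ih]; ring
    | pred i ih =>
      have := hstep (-(i : ℤ) - 1)
      rw [sub_add_cancel] at this
      omega
  exact ⟨m 0, fun j => by rw [← hc]; exact ⟨hm j, hG j⟩⟩

/-! ### Composing and refining codings -/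

lemma Codes.d_add {u v : List Bool} {f : ℤ → Bool} {d : ℤ → ℤ} {g : ℤ → Bool}
    (h : Codes u v f d g) (k : ℤ) (b : ℕ) (hb : ∀ t : ℕ, t < b → g (k + t) = false) :
    d (k + b) = d k + b * u.length := by
  induction b with
  | zero => simp
  | succ b ih =>
    have h1 := (h (k + b)).1
    rw [hb b (by omega), ih fun t ht => hb t (by omega)] at h1
    push_cast
    rw [← add_assoc, h1]
    simp only [cond_false]
    ring

lemma Codes.comp {u v : List Bool} {f : ℤ → Bool} {d : ℤ → ℤ} {g : ℤ → Bool} {b : ℕ}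
    {e : ℤ → ℤ} {G : ℤ → Bool} (h : Codes u v f d g) (he : Desub b g e G) :
    Codes ((List.replicate b u).flatten ++ v) u f (fun j => d (e j)) G := by
  intro j
  rcases he j with ⟨h1, h2, h3⟩ | ⟨h1, h2, h3, h4⟩
  · have := h (e j)
    simp only [h2, cond_false] at this
    simp only [h1, h3, cond_true]
    exact this
  · have hb := h (e j + b)
    simp only [h3, cond_true] at hb
    have hd := h.d_add (e j) b h2
    simp only [h1, h4, cond_false, hb.1, hd]
    refine ⟨?_, ?_⟩
    · simp only [List.length_append, List.length_flatten, List.map_replicate, List.sum_replicate,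
        smul_eq_mul]
      push_cast
      ring
    · rw [occ_append, occ_power]
      refine ⟨fun i hi => ?_, ?_⟩
      · have := (h (e j + i)).2
        rw [h.d_add (e j) i fun t ht => h2 t (by omega), h2 i hi] at this
        exact this
      · have := hb.2
        rw [hd] at this
        simpa [List.length_flatten] using this

/-- A coding by `u^b v` and `u` refines to a coding by `u` and `v`. -/
lemma Codes.refine {u v : List Bool} {f : ℤ → Bool} {b : ℕ} {D : ℤ → ℤ} {G : ℤ → Bool}
    (h : Codes ((List.replicate b u).flatten ++ v) u f D G) :
    ∃ d g e, Codes u v f d g ∧ Desub b g e G ∧ ∀ j, D j = d (e j) := by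
  obtain ⟨e, -, he⟩ := exists_sum (fun j => if G j then (1 : ℤ) else b + 1) 0
  have hmono : StrictMono e := strictMono_of_step fun j => by
    rw [he]; split_ifs <;> omega
  choose J hJ1 hJ2 using exists_block hmono
  have hJ : ∀ j (i : ℤ), 0 ≤ i → e j + i < e (j + 1) → J (e j + i) = j := fun j i h0 h1 =>
    between_unique hmono (hJ1 _) (hJ2 _) (by omega) h1
  have hJ0 : ∀ j, J (e j) = j := fun j => by
    simpa using hJ j 0 le_rfl (by simpa using hmono (lt_add_one j))
  set d : ℤ → ℤ := fun k => D (J k) + (k - e (J k)) * u.length with hd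
  set g : ℤ → Bool := fun k => !G (J k) && decide (k = e (J k) + b) with hg
  have hde : ∀ j, D j = d (e j) := fun j => by simp [hd, hJ0]
  refine ⟨d, g, e, ?_, ?_, hde⟩
  · intro k
    have hk1 := hJ1 k
    have hk2 := hJ2 k
    have hDk := h (J k)
    have hek := he (J k)
    obtain ⟨j, hj⟩ : ∃ j, J k = j := ⟨_, rfl⟩
    obtain ⟨i, hi⟩ : ∃ i : ℕ, k = e j + i := ⟨(k - e j).toNat, by rw [hj] at hk1; omega⟩
    have hdk : d k = D j + i * u.length := by
      simp only [hd, hj]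
      rw [hi]
      ring
    rw [hj] at hk1 hk2 hDk hek
    cases hG : G j with
    | true =>
      simp only [hG, if_true, cond_true] at hDk hek
      have hi0 : i = 0 := by omega
      have hk : k = e j := by omega
      have hgk : g k = false := by simp [hg, hj, hG]
      rw [hgk, cond_false, hk, ← hek, ← hde, ← hde]
      exact hDk
    | false =>
      simp only [hG, cond_false, occ_append, occ_power, List.length_append, List.length_flatten,
        List.map_replicate, List.sum_replicate, smul_eq_mul, Bool.false_eq_true, if_false] at hDk hek
      push_cast at hDk
      by_cases hib : i = b
      · have hgk : g k = true := by
          simp only [hg, hj, hG]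
          simp [hi, hib]
        rw [hgk, cond_true, show k + 1 = e (j + 1) by omega, ← hde, hdk, hDk.1, hib]
        exact ⟨by ring, hDk.2.2⟩
      · have hlt : i < b := by omega
        have hgk : g k = false := by
          simp only [hg, hj, hG]
          simp
          omega
        have hJk : J (k + 1) = j := by
          rw [hi, add_assoc]
          exact hJ j _ (by omega) (by omega)
        rw [hgk, cond_false, hdk]
        refine ⟨?_, hDk.2.1 i hlt⟩
        simp only [hd, hJk]
        rw [hi]
        ring
  · intro j
    have hej := he j
    cases hG : G j with
    | true => left; simpa [hg, hJ0, hG] using hej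
    | false =>
      right
      simp only [hG, Bool.false_eq_true, if_false] at hej
      refine ⟨rfl, fun t ht => ?_, ?_, by omega⟩
      · simp only [hg, hJ j t (by omega) (by omega), hG]
        simp
        omega
      · simp [hg, hJ j b (by omega) (by omega), hG]

lemma UniqCodes.step {u v : List Bool} {f : ℤ → Bool} (b : ℕ) (h : UniqCodes u v f) :
    UniqCodes ((List.replicate b u).flatten ++ v) u f := by
  intro D G D' G' hD hD'
  obtain ⟨d, g, e, h1, h2, h3⟩ := hD.refine
  obtain ⟨d', g', e', h1', h2', h3'⟩ := hD'.refine
  obtain ⟨c, hc⟩ := h _ _ _ _ h1 h1'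
  have h4 : Desub b g (fun j => e' j + c) G' := by
    intro j
    have := h2' j
    simp only [(hc _).2] at this
    rcases this with ⟨p1, p2, p3⟩ | ⟨p1, p2, p3, p4⟩
    · exact Or.inl ⟨p1, p2, by simp only [p3]; ring⟩
    · refine Or.inr ⟨p1, fun t ht => ?_, ?_, by simp only [p4]; ring⟩
      · rw [← p2 t ht]; congr 1; ring
      · rw [← p3]; congr 1; ring
  obtain ⟨c', hc'⟩ := h2.unique h4
  exact ⟨c', fun j => ⟨by rw [h3', h3, (hc _).1, (hc' j).1], (hc' j).2⟩⟩

lemma uniqCodes_letters (f : ℤ → Bool) : UniqCodes [false] [true] f := by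
  have key : ∀ d g, Codes [false] [true] f d g → ∀ j, d j = d 0 + j ∧ g j = f (d j) := by
    intro d g h
    have hs : ∀ j, d (j + 1) = d j + 1 := fun j => by
      have := (h j).1
      cases hg : g j <;> simpa [hg] using this
    intro j
    constructor
    · induction j using Int.induction_on with
      | zero => simp
      | succ i ih => rw [hs, ih]; ring
      | pred i ih =>
        have := hs (-(i : ℤ) - 1)
        rw [sub_add_cancel] at this
        omega
    · have := (h j).2
      cases hg : g j <;> simp [hg, Occ] at this <;> simp [this]
  intro d g d' g' h h'
  refine ⟨d' 0 - d 0, fun j => ?_⟩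
  have h1 := key d g h (j + (d' 0 - d 0))
  have h2 := key d' g' h' j
  have : d' j = d (j + (d' 0 - d 0)) := by omega
  exact ⟨this, by rw [h1.2, h2.2, this]⟩

/-! ### Bounded discrepancy -/

/-- Bounded discrepancy of `g` with ratio `β` of the letter `true` to the letter `false`: the height
function rising by `1` at `true` and falling by `β` at `false` oscillates by less than `1 + β`. -/
def Bal (β : ℝ) (g : ℤ → Bool) : Prop :=
  ∃ H : ℤ → ℝ, (∀ k, H (k + 1) = H k + if g k then 1 else -β) ∧ ∀ k l, H k - H l < 1 + β

lemma height_add {β : ℝ} {g : ℤ → Bool} {H : ℤ → ℝ}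
    (hH : ∀ k, H (k + 1) = H k + if g k then 1 else -β) (k : ℤ) (b : ℕ)
    (hb : ∀ t : ℕ, t < b → g (k + t) = false) : H (k + b) = H k - b * β := by
  induction b with
  | zero => simp
  | succ b ih =>
    have h1 := hH (k + b)
    rw [hb b (by omega), ih fun t ht => hb t (by omega)] at h1
    push_cast
    rw [← add_assoc, h1]
    simp only [Bool.false_eq_true, if_false]
    ring

/-- After a `true` there are at least `b` letters `false`. -/
lemma Bal.gap {β : ℝ} {g : ℤ → Bool} (h : Bal β g) (hβ : 0 < β) {b : ℕ} (hb : b * β ≤ 1)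
    (k : ℤ) (hk : g k = true) (t : ℕ) (ht : t < b) : g (k + 1 + t) = false := by
  obtain ⟨H, hH, hlt⟩ := h
  induction t using Nat.strong_induction_on with
  | _ t ih =>
    by_contra hne
    have hne : g (k + 1 + t) = true := by simpa using hne
    have h1 := height_add hH (k + 1) t fun s hs => ih s hs (by omega)
    have h2 := hH k
    have h3 := hH (k + 1 + t)
    simp only [hk, hne, if_true] at h2 h3
    have h4 := hlt (k + 1 + t + 1) k
    have h5 : ((t : ℝ) + 1) * β ≤ b * β :=
      mul_le_mul_of_nonneg_right (by exact_mod_cast ht) hβ.le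
    linarith

lemma exists_desub {β : ℝ} {g : ℤ → Bool} (h : Bal β g) (hβ : 0 < β) {b : ℕ} (hb : b * β ≤ 1) :
    ∃ e G, Desub b g e G := by
  have hgap := h.gap hβ hb
  -- the set of cut points, as characterized by `Desub.mem_range_iff`
  let S : Set ℤ := {k | ∀ t : ℕ, t < b → g (k + t) = false}
  have hafter : ∀ k, g k = true → k + 1 ∈ S := fun k hk t ht => hgap k hk t ht
  have hnextA : ∀ k ∈ S, g (k + b) = false → k + 1 ∈ S := by
    intro k hk hkb t ht
    rcases Nat.lt_or_ge (t + 1) b with h1 | h1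
    · rw [← hk (t + 1) h1]; congr 1; push_cast; ring
    · rw [← hkb]; congr 1; omega
  let nx : S → S := fun k =>
    if hk : g (k + b) = true then ⟨k + b + 1, hafter _ hk⟩
    else ⟨k + 1, hnextA k k.2 (by simpa using hk)⟩
  have hne : ∃ k, k ∈ S := by
    by_cases hx : ∃ k, g k = true
    · obtain ⟨k, hk⟩ := hx
      exact ⟨_, hafter k hk⟩
    · push Not at hx
      exact ⟨0, fun t _ => by simpa using hx (0 + t)⟩
  have hsurj : Function.Surjective nx := by
    rintro ⟨k, hk⟩
    cases hg : g (k - 1) with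
    | true =>
      have hS : k - 1 - b ∈ S := by
        intro t ht
        by_contra hx
        have h1 := hgap _ (by simpa using hx) (b - 1 - t) (by omega)
        rw [show k - 1 - b + t + 1 + ((b - 1 - t : ℕ) : ℤ) = k - 1 by omega, hg] at h1
        cases h1
      refine ⟨⟨k - 1 - b, hS⟩, ?_⟩
      have : g (k - 1 - b + b) = true := by rw [sub_add_cancel]; exact hg
      apply Subtype.ext
      simp only [nx, this, dif_pos]
      ring
    | false =>
      have hS : ∀ t : ℕ, t ≤ b → g (k - 1 + t) = false := by
        intro t ht
        rcases t with _ | t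
        · simpa using hg
        · rw [← hk t (by omega)]; congr 1; push_cast; ring
      refine ⟨⟨k - 1, fun t ht => hS t ht.le⟩, ?_⟩
      apply Subtype.ext
      simp [nx, hS b le_rfl]
  obtain ⟨k0, hk0⟩ := hne
  obtain ⟨e, -, he⟩ := exists_orbit nx hsurj ⟨k0, hk0⟩
  refine ⟨fun j => (e j : ℤ), fun j => !g (e j + b), fun j => ?_⟩
  have hS : ∀ t : ℕ, t < b → g (e j + t) = false := (e j).2
  cases hg : g (e j + b) with
  | true =>
    right
    refine ⟨by simp [hg], hS, rfl, ?_⟩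
    simp [he, nx, hg]
  | false =>
    left
    refine ⟨by simp [hg], ?_, ?_⟩
    · rcases b with _ | b
      · simpa using hg
      · simpa using hS 0 (by omega)
    · simp [he, nx, hg]

/-- The new height is the old one at the cut points, rescaled by `-1/β`.  The oscillation bound
improves because every cut point is followed by `b` letters `false`. -/
lemma Bal.desub {β : ℝ} {g : ℤ → Bool} {b : ℕ} {e : ℤ → ℤ} {G : ℤ → Bool} (h : Bal β g)
    (hβ : 0 < β) (he : Desub b g e G) : Bal (β⁻¹ - b) G := by
  obtain ⟨H, hH, hlt⟩ := h
  refine ⟨fun j => -(H (e j)) / β, fun j => ?_, fun i j => ?_⟩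
  · rcases he j with ⟨h1, h2, h3⟩ | ⟨h1, h2, h3, h4⟩
    · have := hH (e j)
      simp only [h2, Bool.false_eq_true, if_false] at this
      simp only [h1, h3, this, if_true]
      field_simp
      ring
    · have h5 := hH (e j + b)
      have h6 := height_add hH (e j) b h2
      simp only [h3, if_true] at h5
      simp only [h1, h4, h5, h6, Bool.false_eq_true, if_false]
      field_simp
      ring
  · have h6 := height_add hH (e i) b fun t ht => he.false_of_lt t ht i
    have h7 := hlt (e j) (e i + b)
    rw [h6] at h7
    rw [← sub_div, div_lt_iff₀ hβ]
    have : (1 + (β⁻¹ - b)) * β = 1 + β - b * β := by field_simp; ring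
    rw [this]
    linarith

/-! ### The hull -/

lemma fract_step {α : ℝ} (hα0 : 0 < α) (hα1 : α < 1) (n : ℤ) :
    -Int.fract (((n + 1 : ℤ) : ℝ) * α) =
      -Int.fract ((n : ℝ) * α) + ((if sturmian α 0 n then 1 else 0) - α) := by
  have h0 := Int.fract_nonneg ((n : ℝ) * α)
  have h1 := Int.fract_lt_one ((n : ℝ) * α)
  have hf := Int.floor_add_fract ((n : ℝ) * α)
  by_cases hs : 1 - α ≤ Int.fract ((n : ℝ) * α)
  · have : Int.fract (((n + 1 : ℤ) : ℝ) * α) = Int.fract ((n : ℝ) * α) + α - 1 := by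
      rw [Int.fract_eq_iff]
      refine ⟨by linarith, by linarith, ⌊(n : ℝ) * α⌋ + 1, ?_⟩
      push_cast
      linarith
    rw [this]
    simp [sturmian, hs]
    ring
  · have : Int.fract (((n + 1 : ℤ) : ℝ) * α) = Int.fract ((n : ℝ) * α) + α := by
      rw [Int.fract_eq_iff]
      refine ⟨by linarith, by linarith, ⌊(n : ℝ) * α⌋, ?_⟩
      push_cast
      linarith
    rw [this]
    simp [sturmian, hs]
    ring

lemma hull_window {α : ℝ} {ω : ℤ → Bool}
    (hω : MapClusterPt ω Filter.atTop
      (fun m : ℕ => fun n : ℤ => sturmian α 0 (n + (m : ℤ)))) (s : Finset ℤ) :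
    ∃ m : ℕ, ∀ n ∈ s, ω n = sturmian α 0 (n + (m : ℤ)) := by
  have hU : ∀ᶠ x : ℤ → Bool in nhds ω, ∀ n ∈ s, x n = ω n := by
    rw [Filter.eventually_all_finset]
    intro n _
    have hc : Filter.Tendsto (fun x : ℤ → Bool => x n) (nhds ω) (nhds (ω n)) :=
      (continuous_apply n).tendsto ω
    exact hc.eventually (p := fun y => y = ω n) (by rw [nhds_discrete]; rfl)
  obtain ⟨m, hm⟩ := (hω.frequently hU).exists
  exact ⟨m, fun n hn => (hm n hn).symm⟩

lemma bal_of_hull {α : ℝ} (hα0 : 0 < α) (hα1 : α < 1) {ω : ℤ → Bool}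
    (hω : MapClusterPt ω Filter.atTop
      (fun m : ℕ => fun n : ℤ => sturmian α 0 (n + (m : ℤ)))) : Bal (α / (1 - α)) ω := by
  have hpos : 0 < 1 - α := by linarith
  obtain ⟨F, -, hF⟩ := exists_sum (fun j => (if ω j then (1 : ℝ) else 0) - α) 0
  have hbd : ∀ k l, k ≤ l → |F l - F k| < 1 := by
    intro k l hkl
    obtain ⟨m, hm⟩ := hull_window hω (Finset.Ico k l)
    have hn : ∀ n : ℕ, k + n ≤ l → F (k + n) - F k =
        -Int.fract (((k + n + m : ℤ) : ℝ) * α) + Int.fract (((k + m : ℤ) : ℝ) * α) := by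
      intro n
      induction n with
      | zero => intro _; simp
      | succ n ih =>
        intro hle
        push_cast at hle
        have h1 := ih (by omega)
        have h2 := hF (k + n)
        rw [hm (k + n) (by simp; omega)] at h2
        have h3 := fract_step hα0 hα1 (k + n + m)
        rw [show k + ((n + 1 : ℕ) : ℤ) = k + n + 1 by push_cast; ring,
          show k + (n : ℤ) + 1 + m = k + n + m + 1 by ring, h3, h2]
        linarith
    have h1 := hn (l - k).toNat (by omega)
    rw [show k + ((l - k).toNat : ℤ) = l by omega] at h1
    rw [h1, abs_lt]
    have a1 := Int.fract_nonneg (((l + m : ℤ) : ℝ) * α)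
    have a2 := Int.fract_lt_one (((l + m : ℤ) : ℝ) * α)
    have a3 := Int.fract_nonneg (((k + m : ℤ) : ℝ) * α)
    have a4 := Int.fract_lt_one (((k + m : ℤ) : ℝ) * α)
    constructor <;> linarith
  refine ⟨fun k => F k / (1 - α), fun k => ?_, fun k l => ?_⟩
  · simp only [hF]
    cases ω k <;> simp <;> field_simp
  · rw [← sub_div, div_lt_iff₀ hpos]
    have : (1 + α / (1 - α)) * (1 - α) = 1 := by field_simp; ring
    rw [this]
    rcases le_total k l with h | h
    · have := (abs_lt.mp (hbd k l h)).1
      linarith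
    · exact (abs_lt.mp (hbd l k h)).2

/-! ### Slopes and the standard words -/

/-- The ratio of the number of blocks `s_{n-1}` to the number of blocks `s_n` at level `n`.  It
equals the `n`-th iterate of the Gauss map at `α` for `n ≥ 1`, but `α / (1 - α)` for `n = 0`. -/
noncomputable def sturmSlope (α : ℝ) : ℕ → ℝ
  | 0 => α / (1 - α)
  | n + 1 => Int.fract (sturmSlope α n)⁻¹

lemma inv_slope_zero {α : ℝ} (hα0 : 0 < α) : (sturmSlope α 0)⁻¹ = α⁻¹ - 1 := by
  rw [sturmSlope, inv_div]
  field_simp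

lemma slope_succ_eq {α : ℝ} (hα0 : 0 < α) (n : ℕ) :
    sturmSlope α (n + 1) = (fun x : ℝ => Int.fract x⁻¹)^[n + 1] α := by
  induction n with
  | zero =>
    rw [sturmSlope, inv_slope_zero hα0]
    simp
  | succ n ih => rw [sturmSlope, ih, Function.iterate_succ_apply' _ (n + 1)]

lemma slope_pos_irrational {α : ℝ} (hα0 : 0 < α) (hα1 : α < 1) (hirr : Irrational α) (n : ℕ) :
    0 < sturmSlope α n ∧ Irrational (sturmSlope α n) := by
  induction n with
  | zero =>
    refine ⟨div_pos hα0 (by linarith), ?_⟩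
    have : Irrational (sturmSlope α 0)⁻¹ := by
      rw [inv_slope_zero hα0]
      simpa using hirr.inv.sub_ratCast 1
    simpa using this.inv
  | succ n ih =>
    have h : Irrational (sturmSlope α (n + 1)) := by
      rw [sturmSlope, Int.fract]
      exact ih.2.inv.sub_intCast _
    exact ⟨lt_of_le_of_ne (Int.fract_nonneg _) h.ne_zero.symm, h⟩

lemma sw_succ_succ {α : ℝ} (hα0 : 0 < α) (n : ℕ) :
    sw α (n + 2) =
      (List.replicate ⌊(sturmSlope α n)⁻¹⌋₊ (sw α (n + 1))).flatten ++ sw α n := by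
  rcases n with _ | n
  · rw [inv_slope_zero hα0, Nat.floor_sub_one]
    simp [sw, cfa]
  · rw [slope_succ_eq hα0]
    rfl

lemma sw_ne_nil {α : ℝ} (hα0 : 0 < α) (n : ℕ) : sw α n ≠ [] := by
  induction n using Nat.twoStepInduction with
  | zero => simp [sw]
  | one => simp [sw]
  | more n ih _ => rw [sw_succ_succ hα0]; simp [ih]

lemma exists_coding {α : ℝ} (hα0 : 0 < α) (hα1 : α < 1) (hirr : Irrational α) {ω : ℤ → Bool}
    (hω : Bal (α / (1 - α)) ω) (n : ℕ) :
    ∃ d g, Codes (sw α (n + 1)) (sw α n) ω d g ∧ Bal (sturmSlope α n) g := by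
  induction n with
  | zero =>
    refine ⟨id, ω, fun j => ?_, hω⟩
    cases h : ω j <;> simp [sw, Occ, h]
  | succ n ih =>
    obtain ⟨d, g, hd, hg⟩ := ih
    obtain ⟨hpos, -⟩ := slope_pos_irrational hα0 hα1 hirr n
    have hinv : 0 ≤ (sturmSlope α n)⁻¹ := by positivity
    obtain ⟨e, G, he⟩ := exists_desub hg hpos (b := ⌊(sturmSlope α n)⁻¹⌋₊)
      (by rw [← le_div_iff₀ hpos, one_div]; exact Nat.floor_le hinv)
    refine ⟨fun j => d (e j), G, ?_, ?_⟩
    · rw [sw_succ_succ hα0]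
      exact hd.comp he
    · have := hg.desub hpos he
      rwa [natCast_floor_eq_intCast_floor hinv] at this

lemma uniq_coding {α : ℝ} (hα0 : 0 < α) (ω : ℤ → Bool) (n : ℕ) :
    UniqCodes (sw α (n + 1)) (sw α n) ω := by
  induction n with
  | zero => simpa [sw] using uniqCodes_letters ω
  | succ n ih =>
    rw [sw_succ_succ hα0]
    exact ih.step _

lemma Codes.strictMono {u v : List Bool} {f : ℤ → Bool} {d : ℤ → ℤ} {g : ℤ → Bool}
    (hu : u ≠ []) (hv : v ≠ []) (h : Codes u v f d g) : StrictMono d :=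
  strictMono_of_step fun j => by
    have hu := List.length_pos_iff.mpr hu
    have hv := List.length_pos_iff.mpr hv
    have := (h j).1
    cases hg : g j <;> simp only [hg, cond_true, cond_false] at this <;> omega

lemma IsNPartition.exists_codes {α : ℝ} {n : ℕ} {f : ℤ → Bool} {d : ℤ → ℤ} {z : ℤ → List Bool}
    (h : IsNPartition α n f d z) :
    ∃ g : ℤ → Bool, (∀ j, z j = bif g j then sw α n else sw α (n + 1)) ∧
      Codes (sw α (n + 1)) (sw α n) f d g := by
  obtain ⟨-, -, hz, hd, hf⟩ := h
  have : ∀ j, ∃ b : Bool, z j = bif b then sw α n else sw α (n + 1) := fun j => by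
    rcases hz j with h | h
    · exact ⟨false, h⟩
    · exact ⟨true, h⟩
  choose g hg using this
  refine ⟨g, hg, fun j => ?_⟩
  rw [← hg]
  exact ⟨hd j, (eq_map_iff_occ _ _ _).mp (hf j)⟩

/-- Every element `ω` of the hull `Ω(α)` — i.e. every accumulation point, in the product
topology on `{0,1}^ℤ`, of the sequence of translates `(T^m v_{α,0})_{m ∈ ℕ}` where
`(Tf)(n) = f(n+1)` — admits a unique `(n,α)`-partition for every `n ∈ ℕ₀`. -/
theorem nPartition_existsUnique_of_hull
    (α : ℝ) (hα0 : 0 < α) (hα1 : α < 1) (hirr : Irrational α)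
    (ω : ℤ → Bool)
    (hω : MapClusterPt ω Filter.atTop
      (fun m : ℕ => fun n : ℤ => sturmian α 0 (n + (m : ℤ))))
    (n : ℕ) :
    ∃! p : (ℤ → ℤ) × (ℤ → List Bool), IsNPartition α n ω p.1 p.2 := by
  obtain ⟨d, g, hd, -⟩ := exists_coding hα0 hα1 hirr (bal_of_hull hα0 hα1 hω) n
  have hu := sw_ne_nil hα0 (n + 1)
  have hv := sw_ne_nil hα0 n
  have hmono := hd.strictMono hu hv
  obtain ⟨c, hc1, hc2⟩ := exists_block hmono 0
  refine ⟨(fun j => d (j + c), fun j => bif g (j + c) then sw α n else sw α (n + 1)), ?_, ?_⟩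
  · refine ⟨fun i j hij => hmono (by omega), ⟨by simpa using hc1, by simpa [add_comm] using hc2⟩,
      fun j => ?_, fun j => ?_, fun j => ?_⟩
    · cases h : g (j + c) <;> simp [h]
    · have := (hd (j + c)).1
      rwa [add_right_comm] at this
    · exact (eq_map_iff_occ _ _ _).mpr (hd (j + c)).2
  · rintro ⟨d', z'⟩ hp
    obtain ⟨g', hz', hd'⟩ := hp.exists_codes
    obtain ⟨c', hc'⟩ := uniq_coding hα0 ω n _ _ _ _ hd hd'
    obtain ⟨-, ⟨h0, h1⟩, -⟩ := hp
    simp only at hz' hc' h0 h1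
    rw [(hc' _).1] at h0 h1
    have hcc : c' = c := between_unique hmono (by simpa using h0)
      (by simpa [add_comm] using h1) hc1 hc2
    subst hcc
    refine Prod.ext (funext fun j => (hc' j).1) (funext fun j => ?_)
    simp only [hz' j, (hc' j).2]
end
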